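/- Let H be a partial mixed graph and M a completion of H. Suppose ⟨S_1, K_1, K_2, …, K_m, S_2⟩ (m ≥ 1) is an uncovered path in H such that the mark at K_1 on the edge S_1–K_1 is a circle, every mark on each edge K_j–K_{j+1} (1 ≤ j ≤ m−1) is a circle, and the mark at K_m on the edge K_m–S_2 is a circle. Then in M every vertex K_j (1 ≤ j ≤ m) is an ancestor of S_1 or an ancestor of S_2. -/

import Mathlib

/-- Marks at edge ends in a partial mixed graph. -/
inductive Mark : Type
  | tail
  | arrow
  | circle
deriving DecidableEq

/-- A partial mixed graph (PMG): a symmetric irreflexive adjacency relation together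
with, for each ordered pair `(a, b)` of adjacent vertices, a mark `mark a b` at `b` on
the edge `a–b`, such that no edge has tails at both endpoints. -/
structure PMG (V : Type) where
  adj : V → V → Prop
  symm : ∀ a b, adj a b → adj b a
  irrefl : ∀ a, ¬ adj a a
  mark : V → V → Mark
  noDoubleTail : ∀ a b, adj a b → ¬ (mark a b = Mark.tail ∧ mark b a = Mark.tail)

namespace PMG

variable {V : Type}

/-- `a → b`: adjacent, tail at `a`, arrowhead at `b`. -/
def dir (G : PMG V) (a b : V) : Prop :=
  G.adj a b ∧ G.mark b a = Mark.tail ∧ G.mark a b = Mark.arrow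

/-- `a ↔ b`: adjacent, arrowheads at both endpoints. -/
def bidir (G : PMG V) (a b : V) : Prop :=
  G.adj a b ∧ G.mark b a = Mark.arrow ∧ G.mark a b = Mark.arrow

/-- `a` is an ancestor of `b`: `a = b` or there is a directed path from `a` to `b`. -/
def Anc (G : PMG V) (a b : V) : Prop :=
  Relation.ReflTransGen G.dir a b

/-- `a` is an ancestor of some vertex of the set `S`. -/
def AncSet (G : PMG V) (a : V) (S : Set V) : Prop :=
  ∃ v ∈ S, G.Anc a v

/-- A mixed graph: a PMG with no circle marks. -/
def IsMixed (G : PMG V) : Prop :=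
  ∀ a b, G.adj a b → G.mark a b ≠ Mark.circle

/-- Ancestral: no directed cycles and no almost directed cycles. -/
def Ancestral (G : PMG V) : Prop :=
  ∀ a b, G.Anc a b → a ≠ b → ¬ G.dir b a ∧ ¬ G.bidir a b

/-- Unshielded collider `(a, b, c)`: `a, c` both adjacent to `b`, `a` and `c`
distinct and nonadjacent, arrowheads at `b` on both edges. -/
def UnshieldedCollider (G : PMG V) (a b c : V) : Prop :=
  a ≠ c ∧ G.adj a b ∧ G.adj c b ∧ ¬ G.adj a c ∧
    G.mark a b = Mark.arrow ∧ G.mark c b = Mark.arrow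

/-- `M` is a completion of the PMG `H`: same vertices and adjacencies, all non-circle
marks of `H` occur identically in `M`, `M` is an ancestral mixed graph, and every
unshielded collider of `M` is already an unshielded collider of `H`. -/
def Completion (H M : PMG V) : Prop :=
  (∀ a b, M.adj a b ↔ H.adj a b) ∧
  (∀ a b, H.adj a b → H.mark a b ≠ Mark.circle → M.mark a b = H.mark a b) ∧
  M.IsMixed ∧ M.Ancestral ∧
  (∀ a b c, M.UnshieldedCollider a b c → H.UnshieldedCollider a b c)

/-- An edge usable in a possible directed path from `a` to `b`:
adjacent, no arrowhead at `a`, no tail at `b`. -/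
def possEdge (G : PMG V) (a b : V) : Prop :=
  G.adj a b ∧ G.mark b a ≠ Mark.arrow ∧ G.mark a b ≠ Mark.tail

/-- A circle edge: adjacent with circle marks at both endpoints. -/
def circleEdge (G : PMG V) (a b : V) : Prop :=
  G.adj a b ∧ G.mark a b = Mark.circle ∧ G.mark b a = Mark.circle

/-- `p 0, …, p n` is a path: distinct vertices, consecutive ones adjacent. -/
def IsPathOn (G : PMG V) (p : ℕ → V) (n : ℕ) : Prop :=
  (∀ i ≤ n, ∀ j ≤ n, p i = p j → i = j) ∧ ∀ i < n, G.adj (p i) (p (i+1))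

/-- `p 0, …, p n` is a possible directed path. -/
def IsPossDirPathOn (G : PMG V) (p : ℕ → V) (n : ℕ) : Prop :=
  (∀ i ≤ n, ∀ j ≤ n, p i = p j → i = j) ∧ ∀ i < n, G.possEdge (p i) (p (i+1))

/-- `p 0, …, p n` is a circle path. -/
def IsCirclePathOn (G : PMG V) (p : ℕ → V) (n : ℕ) : Prop :=
  (∀ i ≤ n, ∀ j ≤ n, p i = p j → i = j) ∧ ∀ i < n, G.circleEdge (p i) (p (i+1))

/-- The path `p 0, …, p n` is uncovered: any two nonconsecutive neighbours of an
internal vertex are nonadjacent. -/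
def UncoveredOn (G : PMG V) (p : ℕ → V) (n : ℕ) : Prop :=
  ∀ i, i + 2 ≤ n → ¬ G.adj (p i) (p (i+2))

/-- `F_x` relative to `V'`: the vertices of `V'` adjacent to `x` whose edge carries
a circle or an arrowhead at `x`. -/
def Fset (G : PMG V) (V' : Set V) (x : V) : Set V :=
  {v | v ∈ V' ∧ G.adj v x ∧ (G.mark v x = Mark.circle ∨ G.mark v x = Mark.arrow)}

/-- `p 0, …, p n` is an unbridged path relative to `V'` in `G`: an uncovered circle
path with at least one edge, lying in `G[−V']`, with
`F_{p 0} \ F_{p 1} ≠ ∅` and `F_{p n} \ F_{p (n-1)} ≠ ∅`. -/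
def UnbridgedOn (G : PMG V) (V' : Set V) (p : ℕ → V) (n : ℕ) : Prop :=
  1 ≤ n ∧ G.IsCirclePathOn p n ∧ G.UncoveredOn p n ∧
  (∀ i ≤ n, p i ∉ V') ∧
  (G.Fset V' (p 0) \ G.Fset V' (p 1)).Nonempty ∧
  (G.Fset V' (p n) \ G.Fset V' (p (n-1))).Nonempty

/-- The set `S_A`: `A` together with all vertices adjacent to `A` whose edge has an
arrowhead at `A`. -/
def SA (G : PMG V) (A : V) : Set V :=
  {A} ∪ {v | G.adj v A ∧ G.mark v A = Mark.arrow}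

end PMG

/-- Let `M` be a completion of the PMG `H`. If `⟨S_1, K_1, …, K_m, S_2⟩` (`m ≥ 1`,
with `S_1 = p 0`, `K_j = p j`, `S_2 = p (m+1)`) is an uncovered path in `H` with a
circle at `K_1` on the edge `S_1–K_1`, all circle marks on the edges `K_j–K_{j+1}`,
and a circle at `K_m` on the edge `K_m–S_2`, then in `M` every `K_j` is an ancestor
of `S_1` or of `S_2`. -/
theorem circle_core_ancestor_of_endpoint {V : Type} (H M : PMG V)
    (hHM : PMG.Completion H M)
    (p : ℕ → V) (m : ℕ) (hm : 1 ≤ m)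
    (hpath : H.IsPathOn p (m+1)) (hunc : H.UncoveredOn p (m+1))
    (hS1 : H.mark (p 0) (p 1) = Mark.circle)
    (hmid : ∀ j, 1 ≤ j → j + 1 ≤ m → H.circleEdge (p j) (p (j+1)))
    (hS2 : H.mark (p (m+1)) (p m) = Mark.circle) :
    ∀ j, 1 ≤ j → j ≤ m → M.Anc (p j) (p 0) ∨ M.Anc (p j) (p (m+1)) := by
  obtain ⟨hadj, hmk, hmix, hanc, hcol⟩ := hHM
  obtain ⟨hinj, hpa⟩ := hpath
  have hMadj : ∀ i, i < m + 1 → M.adj (p i) (p (i+1)) := fun i hi => (hadj _ _).2 (hpa i hi)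
  have hcirc : ∀ j, j + 1 ≤ m → H.mark (p j) (p (j+1)) = Mark.circle := by
    intro j hj
    rcases Nat.eq_zero_or_pos j with rfl | h
    · exact hS1
    · exact (hmid j h hj).2.1
  have hdir : ∀ a b, M.adj a b → M.mark b a = Mark.tail → M.dir a b := by
    intro a b hab ht
    refine ⟨hab, ht, ?_⟩
    have h1 := hmix a b hab
    have h2 := M.noDoubleTail a b hab
    cases h : M.mark a b
    · exact absurd ⟨h, ht⟩ h2
    · rfl
    · exact absurd h h1
  have key : ∀ j, j + 1 ≤ m → M.dir (p (j+1)) (p j) ∨ M.dir (p (j+1)) (p (j+2)) := by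
    intro j hj
    have a1 := hMadj j (by omega)
    have a2 := hMadj (j+1) (by omega)
    have a1' := M.symm _ _ a1
    have a2' := M.symm _ _ a2
    cases h : M.mark (p j) (p (j+1))
    · exact Or.inl (hdir _ _ a1' h)
    · cases h' : M.mark (p (j+2)) (p (j+1))
      · exact Or.inr (hdir _ _ a2 h')
      · exfalso
        have hu : M.UnshieldedCollider (p j) (p (j+1)) (p (j+2)) := by
          refine ⟨?_, a1, a2', ?_, h, h'⟩
          · intro he
            have := hinj j (by omega) (j+2) (by omega) he
            omega
          · intro ha
            exact hunc j (by omega) ((hadj _ _).1 ha)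
        have h3 := (hcol _ _ _ hu).2.2.2.2.1
        rw [hcirc j hj] at h3
        cases h3
      · exact absurd h' (hmix _ _ a2')
    · exact absurd h (hmix _ _ a1)
  have asym : ∀ a b, M.dir a b → M.dir b a → False := by
    intro a b h1 h2
    have := h1.2.1.symm.trans h2.2.2
    cases this
  have left : ∀ j, j + 1 ≤ m → M.dir (p (j+1)) (p j) → M.Anc (p (j+1)) (p 0) := by
    intro j
    induction j with
    | zero => intro _ h; exact Relation.ReflTransGen.single h
    | succ k ih =>
      intro hk h
      rcases key k (by omega) with h' | h'
      · exact Relation.ReflTransGen.head h (ih (by omega) h')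
      · exact (asym _ _ h h').elim
  have right : ∀ n j, j + 1 + n = m → M.dir (p (j+1)) (p (j+2)) →
      M.Anc (p (j+1)) (p (m+1)) := by
    intro n
    induction n with
    | zero =>
      intro j hj h
      have : m + 1 = j + 2 := by omega
      rw [this]
      exact Relation.ReflTransGen.single h
    | succ k ih =>
      intro j hj h
      rcases key (j+1) (by omega) with h' | h'
      · exact (asym _ _ h h').elim
      · exact Relation.ReflTransGen.head h (ih (j+1) (by omega) h')
  intro j h1 h2
  obtain ⟨k, rfl⟩ : ∃ k, j = k + 1 := ⟨j - 1, by omega⟩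
  rcases key k h2 with h | h
  · exact Or.inl (left k h2 h)
  · exact Or.inr (right (m - (k+1)) k (by omega) h)
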